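/- In the valuative tree setting: let k ≥ 1, let v₁,…,v_k be the curve valuations of distinct irreducible f₁,…,f_k ∈ 𝔪 ⊂ ℂ[[x,y]], let b₁,…,b_k ∈ ℚ with Bⱼ := bⱼ/m(fⱼ) ≥ 1, B̃ := max Bⱼ, I₁ := {j : Bⱼ = B̃}, I₂ := {j : Bⱼ < B̃}. If a normalized valuation v satisfies v(fⱼ) = bⱼ for all j, then (i) α(⋀_{i∈I₁} v_i) ≥ B̃, and (ii) α(v_i ⋀ v_j) = Bⱼ for all i ∈ I₁, j ∈ I₂. [Necessity direction of the 2-dimensional interpolation criterion.] -/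

import Mathlib

open scoped Classical

/-!
Three points of a tree obey an ultrametric rule: of their pairwise infima, two coincide and the
third is at least as large. Apply it to `v`, `vᵢ`, `vⱼ`. Dividing `v(fⱼ) = bⱼ` by `m(fⱼ)` gives
`α(v ⋀ vⱼ) = Bⱼ`. If `Bⱼ < Bᵢ`, then `v ⋀ vᵢ` is the large one, so `vᵢ ⋀ vⱼ = v ⋀ vⱼ` has skewness
`Bⱼ`. The infima `v ⋀ vᵢ` with `i ∈ I₁` all lie on the segment below `v`, so the smallest of them is
below every `vᵢ` with `i ∈ I₁` while having skewness `B̃`.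
-/

section Order

variable {V : Type*} [SemilatticeInf V]

theorem exists_mem_inf'_eq_of_isChain {ι : Type*} {s : Finset ι} (hs : s.Nonempty) {f : ι → V}
    (hf : IsChain (· ≤ ·) (f '' s)) : ∃ i ∈ s, s.inf' hs f = f i := by
  obtain ⟨i, hi, hmin⟩ := s.exists_minimalFor f hs
  refine ⟨i, hi, le_antisymm (Finset.inf'_le f hi) (Finset.le_inf' hs f fun j hj => ?_)⟩
  exact (hf.total (Set.mem_image_of_mem f hi) (Set.mem_image_of_mem f hj)).elim id (hmin hj)

theorem inf_le_of_not_inf_le {x y z : V} (hx : IsChain (· ≤ ·) (Set.Iic x))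
    (h : ¬ x ⊓ z ≤ y) : x ⊓ y ≤ z := by
  rcases hx.total (inf_le_left : x ⊓ y ≤ x) (inf_le_left : x ⊓ z ≤ x) with hyz | hzy
  · exact hyz.trans inf_le_right
  · exact absurd (hzy.trans inf_le_right) h

theorem inf_eq_inf_of_not_inf_le {x y z : V} (hx : IsChain (· ≤ ·) (Set.Iic x))
    (hz : IsChain (· ≤ ·) (Set.Iic z)) (h : ¬ x ⊓ z ≤ y) : x ⊓ y = z ⊓ y :=
  le_antisymm (le_inf (inf_le_of_not_inf_le hx h) inf_le_right)
    (le_inf (inf_le_of_not_inf_le hz (inf_comm x z ▸ h)) inf_le_right)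

end Order

section Skewness

variable {V R : Type*} [SemilatticeInf V] [Preorder R] {α : V → R}

theorem le_map_inf'_of_forall_le_map_inf (hα : Monotone α) {v : V}
    (hv : IsChain (· ≤ ·) (Set.Iic v)) {ι : Type*} {s : Finset ι} (hs : s.Nonempty) {w : ι → V}
    {c : R} (hc : ∀ i ∈ s, c ≤ α (v ⊓ w i)) : c ≤ α (s.inf' hs w) := by
  have hchain : IsChain (· ≤ ·) ((fun i => v ⊓ w i) '' s) :=
    hv.mono (Set.image_subset_iff.2 fun _ _ => inf_le_left)
  obtain ⟨i, hi, hinf⟩ := exists_mem_inf'_eq_of_isChain hs hchain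
  calc
    c ≤ α (v ⊓ w i) := hc i hi
    _ = α (s.inf' hs fun i => v ⊓ w i) := by rw [hinf]
    _ ≤ α (s.inf' hs w) := hα (Finset.inf'_mono_fun fun _ _ => inf_le_right)

theorem inf_eq_inf_of_map_inf_lt_map_inf (hα : Monotone α) {v x y : V}
    (hv : IsChain (· ≤ ·) (Set.Iic v)) (hx : IsChain (· ≤ ·) (Set.Iic x))
    (h : α (v ⊓ y) < α (v ⊓ x)) : x ⊓ y = v ⊓ y := by
  refine inf_eq_inf_of_not_inf_le hx hv fun hle => h.not_ge (hα ?_)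
  exact le_inf inf_le_left (inf_comm v x ▸ hle)

theorem stmt_15_general (hα : Monotone α) (htree : ∀ x : V, IsChain (· ≤ ·) (Set.Iic x))
    {ι : Type*} (cv : ι → V) (B : ι → R) (v : V) (hv : ∀ j, α (v ⊓ cv j) = B j)
    (c : R) (s : Finset ι) (hs : s.Nonempty) (hc : ∀ i ∈ s, c ≤ B i) :
    c ≤ α (s.inf' hs cv) ∧ ∀ i ∈ s, ∀ j, B j < c → α (cv i ⊓ cv j) = B j := by
  simp only [← hv] at hc ⊢
  refine ⟨le_map_inf'_of_forall_le_map_inf hα (htree v) hs hc, fun i hi j hj => ?_⟩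
  rw [inf_eq_inf_of_map_inf_lt_map_inf hα (htree v) (htree (cv i)) (hj.trans_le (hc i hi))]

end Skewness

/-- Necessity direction of the 2-dimensional valuative interpolation criterion, in the
abstract valuative-tree setting: if a normalized valuation v satisfies
v(fⱼ) = bⱼ (encoded via the Favre–Jonsson identity v(fⱼ) = α(v ⋀ vⱼ)·m(fⱼ)), then
(i) α(⋀_{i∈I₁} vᵢ) ≥ B̃, and (ii) α(vᵢ ⋀ vⱼ) = Bⱼ for i ∈ I₁, j ∈ I₂. -/
theorem stmt_15 {V : Type*} [SemilatticeInf V] (k : ℕ) (hk : 0 < k)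
    (α : V → ENNReal) (hα : StrictMono α)
    (htree : ∀ a b c : V, a ≤ c → b ≤ c → a ≤ b ∨ b ≤ a)
    (cv : Fin k → V) (m b B : Fin k → ENNReal) (Btil : ENNReal)
    (hm : ∀ j, m j ≠ 0 ∧ m j ≠ ⊤)
    (hB1 : ∀ j, 1 ≤ B j) (hBfin : ∀ j, B j ≠ ⊤)
    (hb : ∀ j, b j = B j * m j)
    (hBtil : IsGreatest (Set.range B) Btil)
    (I1 I2 : Finset (Fin k))
    (hI1 : I1 = Finset.univ.filter fun j => B j = Btil)
    (hI2 : I2 = Finset.univ.filter fun j => B j < Btil)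
    (hI1ne : I1.Nonempty)
    (v : V) (hv : ∀ j, α (v ⊓ cv j) * m j = b j) :
    Btil ≤ α (I1.inf' hI1ne cv) ∧
    ∀ i ∈ I1, ∀ j ∈ I2, α (cv i ⊓ cv j) = B j := by
  have hvB (j : Fin k) : α (v ⊓ cv j) = B j :=
    (ENNReal.mul_left_inj (hm j).1 (hm j).2).1 ((hv j).trans (hb j))
  have hchain (x : V) : IsChain (· ≤ ·) (Set.Iic x) := fun a ha b hb _ => htree a b x ha hb
  subst hI1 hI2
  obtain ⟨hinf, hpair⟩ := stmt_15_general hα.monotone hchain cv B v hvB Btil _ hI1ne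
    fun i hi => (Finset.mem_filter.1 hi).2.ge
  exact ⟨hinf, fun i hi j hj => hpair i hi j (Finset.mem_filter.1 hj).2⟩
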